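/- arXiv:1502.02336 — 7 statements merged into one kernel-verified Lean document; each statement's English description precedes it below -/
import Mathlib

section
/- Let n, k be positive integers, σ > 0, Φ a real n×k matrix with ‖ΦᵀΦ − n·I_k‖₂ < n/2, θ₀ ∈ ℝ^k and R ∈ ℝⁿ. Let Y ~ N(Φθ₀ + R, σ²·Iₙ) and set θ_Y = (ΦᵀΦ)⁻¹ Φᵀ Y. Then E‖θ_Y − θ₀‖² ≤ 2σ²k/n + 2‖R‖²/n. -/
open MeasureTheory ProbabilityTheory Matrix

/-- The `ℓ²→ℓ²` operator (spectral) norm of a square real matrix. -/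
noncomputable def opNorm {k : ℕ} (A : Matrix (Fin k) (Fin k) ℝ) : ℝ :=
  ‖Matrix.toEuclideanCLM (𝕜 := ℝ) (n := Fin k) A‖

/-- The quadratic form of a matrix is bounded below by the negated operator norm. -/
lemma neg_opNorm_mul_dotProduct_le {k : ℕ} (A : Matrix (Fin k) (Fin k) ℝ) (v : Fin k → ℝ) :
    -(opNorm A * (v ⬝ᵥ v)) ≤ v ⬝ᵥ A *ᵥ v := by
  set x : EuclideanSpace ℝ (Fin k) := WithLp.toLp 2 v
  have hinner : inner ℝ x (toEuclideanCLM (𝕜 := ℝ) A x) = v ⬝ᵥ A *ᵥ v :=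
    inner_toEuclideanCLM A x x
  have hnorm : ‖x‖ * ‖x‖ = v ⬝ᵥ v := by
    rw [← pow_two, EuclideanSpace.real_norm_sq_eq]
    simp [x, dotProduct, pow_two]
  have hle : |inner ℝ x (toEuclideanCLM (𝕜 := ℝ) A x)| ≤ opNorm A * (v ⬝ᵥ v) :=
    calc _ ≤ ‖x‖ * ‖toEuclideanCLM (𝕜 := ℝ) A x‖ := abs_real_inner_le_norm _ _
      _ ≤ ‖x‖ * (opNorm A * ‖x‖) := by
        gcongr
        exact (toEuclideanCLM (𝕜 := ℝ) A).le_opNorm x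
      _ = opNorm A * (v ⬝ᵥ v) := by rw [← hnorm]; ring
  rw [← hinner]
  exact (abs_le.mp hle).1

lemma dotProduct_self_nonneg_real {ι : Type*} [Fintype ι] (v : ι → ℝ) : 0 ≤ v ⬝ᵥ v :=
  Finset.sum_nonneg fun i _ => mul_self_nonneg (v i)

/-- If the Gram matrix `ΦᵀΦ` is within `c / 2` of `c • 1`, it is bounded below by `c / 2`. -/
lemma half_mul_dotProduct_le_gram {n k : ℕ} {c : ℝ} {Φ : Matrix (Fin n) (Fin k) ℝ}
    (hΦ : opNorm (Φᵀ * Φ - c • (1 : Matrix (Fin k) (Fin k) ℝ)) < c / 2) (v : Fin k → ℝ) :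
    c / 2 * (v ⬝ᵥ v) ≤ v ⬝ᵥ (Φᵀ * Φ) *ᵥ v := by
  have h := neg_opNorm_mul_dotProduct_le (Φᵀ * Φ - c • (1 : Matrix (Fin k) (Fin k) ℝ)) v
  rw [sub_mulVec, dotProduct_sub, smul_mulVec, one_mulVec, dotProduct_smul, smul_eq_mul] at h
  have hv : 0 ≤ v ⬝ᵥ v := dotProduct_self_nonneg_real v
  have := mul_le_mul_of_nonneg_right hΦ.le hv
  linarith

/-- A matrix whose quadratic form is bounded below by a positive constant is invertible. -/
lemma isUnit_det_of_coercive {k : ℕ} {c : ℝ} (hc : 0 < c) {G : Matrix (Fin k) (Fin k) ℝ}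
    (hG : ∀ v : Fin k → ℝ, c * (v ⬝ᵥ v) ≤ v ⬝ᵥ G *ᵥ v) : IsUnit G.det := by
  rw [isUnit_iff_ne_zero]
  intro hdet
  obtain ⟨v, hv0, hv⟩ := exists_mulVec_eq_zero_iff.mpr hdet
  have h := hG v
  rw [hv, dotProduct_zero] at h
  have hpos : 0 < v ⬝ᵥ v :=
    lt_of_le_of_ne (dotProduct_self_nonneg_real v) fun h => hv0 (dotProduct_self_eq_zero.mp h.symm)
  exact absurd h (not_le.mpr (mul_pos hc hpos))

/-- The diagonal entries of the inverse of a coercive matrix are at most the inverse of the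
coercivity constant. -/
lemma inv_apply_self_le_of_coercive {k : ℕ} {c : ℝ} (hc : 0 < c) {G : Matrix (Fin k) (Fin k) ℝ}
    (hG : ∀ v : Fin k → ℝ, c * (v ⬝ᵥ v) ≤ v ⬝ᵥ G *ᵥ v) (j : Fin k) : G⁻¹ j j ≤ c⁻¹ := by
  have h := hG (G⁻¹ *ᵥ Pi.single j 1)
  rw [mulVec_mulVec, mul_nonsing_inv _ (isUnit_det_of_coercive hc hG), one_mulVec,
    dotProduct_single, mul_one, mulVec_single_one] at h
  have hsq : G⁻¹ j j * G⁻¹ j j ≤ G⁻¹.col j ⬝ᵥ G⁻¹.col j :=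
    Finset.single_le_sum (f := fun i => G⁻¹ i j * G⁻¹ i j) (fun i _ => mul_self_nonneg _)
      (Finset.mem_univ j)
  have hle : c * (G⁻¹ j j * G⁻¹ j j) ≤ G⁻¹ j j :=
    (mul_le_mul_of_nonneg_left hsq hc.le).trans h
  rw [← one_div c, le_div_iff₀ hc]
  by_contra! hlt
  have : 0 < G⁻¹ j j := by
    by_contra! hneg
    nlinarith
  nlinarith

/-- The least-squares solution map `(ΦᵀΦ)⁻¹Φᵀ` has squared operator norm at most the inverse of
the coercivity constant of `ΦᵀΦ`. -/
lemma mul_dotProduct_leastSquares_le {n k : ℕ} {c : ℝ} (hc : 0 < c)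
    {Φ : Matrix (Fin n) (Fin k) ℝ}
    (hG : ∀ v : Fin k → ℝ, c * (v ⬝ᵥ v) ≤ v ⬝ᵥ (Φᵀ * Φ) *ᵥ v) (r : Fin n → ℝ) :
    c * ((((Φᵀ * Φ)⁻¹ * Φᵀ) *ᵥ r) ⬝ᵥ (((Φᵀ * Φ)⁻¹ * Φᵀ) *ᵥ r)) ≤ r ⬝ᵥ r := by
  set v := ((Φᵀ * Φ)⁻¹ * Φᵀ) *ᵥ r with hv
  have hGv : (Φᵀ * Φ) *ᵥ v = Φᵀ *ᵥ r := by
    rw [hv, mulVec_mulVec, ← Matrix.mul_assoc, mul_nonsing_inv _ (isUnit_det_of_coercive hc hG),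
      Matrix.one_mul]
  have hform : v ⬝ᵥ (Φᵀ * Φ) *ᵥ v = (Φ *ᵥ v) ⬝ᵥ (Φ *ᵥ v) := by
    rw [← mulVec_mulVec, dotProduct_mulVec, vecMul_transpose]
  have hcross : v ⬝ᵥ (Φᵀ * Φ) *ᵥ v = (Φ *ᵥ v) ⬝ᵥ r := by
    rw [hGv, dotProduct_mulVec, vecMul_transpose]
  have hdiff : 0 ≤ (r - Φ *ᵥ v) ⬝ᵥ (r - Φ *ᵥ v) := dotProduct_self_nonneg_real _
  rw [sub_dotProduct, dotProduct_sub, dotProduct_sub, dotProduct_comm r (Φ *ᵥ v)] at hdiff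
  have := hG v
  linarith

/-- Bias-variance decomposition for a linear functional of independent real Gaussians with
common variance. -/
lemma integral_sq_dotProduct_sub_pi_gaussianReal {n : ℕ} (a m : Fin n → ℝ) (s : NNReal) (b : ℝ) :
    Integrable (fun y : Fin n → ℝ => (a ⬝ᵥ y - b) ^ 2)
        (Measure.pi fun i => gaussianReal (m i) s) ∧
      ∫ y : Fin n → ℝ, (a ⬝ᵥ y - b) ^ 2 ∂(Measure.pi fun i => gaussianReal (m i) s)
        = s * (a ⬝ᵥ a) + (a ⬝ᵥ m - b) ^ 2 := by
  set μ := Measure.pi fun i => gaussianReal (m i) s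
  have hcoord : ∀ i, MemLp (fun x : ℝ => a i * x) 2 (gaussianReal (m i) s) := fun i =>
    (memLp_id_gaussianReal 2).const_mul (a i)
  have hcoord_pi : ∀ i, MemLp (fun y : Fin n → ℝ => a i * y i) 2 μ := fun i =>
    (hcoord i).comp_measurePreserving (measurePreserving_eval _ i)
  have hsum : MemLp (fun y : Fin n → ℝ => a ⬝ᵥ y) 2 μ := memLp_finsetSum _ fun i _ => hcoord_pi i
  have hsub : MemLp (fun y : Fin n → ℝ => a ⬝ᵥ y - b) 2 μ := hsum.sub (memLp_const b)
  have hvar : Var[fun y : Fin n → ℝ => a ⬝ᵥ y; μ] = s * (a ⬝ᵥ a) := by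
    have h := variance_sum_pi hcoord
    have hfun : (∑ i, fun y : Fin n → ℝ => a i * y i) = fun y => a ⬝ᵥ y := by
      ext y
      simp [dotProduct]
    rw [hfun] at h
    rw [h, dotProduct, Finset.mul_sum]
    refine Finset.sum_congr rfl fun i _ => ?_
    rw [variance_const_mul, variance_fun_id_gaussianReal]
    ring
  have hmean : ∫ y, a ⬝ᵥ y ∂μ = a ⬝ᵥ m := by
    simp only [dotProduct]
    rw [integral_finsetSum _ fun i _ => (hcoord_pi i).integrable one_le_two]
    refine Finset.sum_congr rfl fun i _ => ?_
    have heval : ∫ y, y i ∂μ = ∫ x, x ∂gaussianReal (m i) s :=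
      integral_comp_eval (μ := fun i => gaussianReal (m i) s) (f := fun x : ℝ => x) (by fun_prop)
    rw [integral_const_mul, heval, integral_id_gaussianReal]
  refine ⟨hsub.integrable_sq, ?_⟩
  have h := variance_eq_sub hsub
  rw [variance_sub_const hsum.aestronglyMeasurable, hvar,
    integral_sub (hsum.integrable one_le_two) (integrable_const b), hmean] at h
  simp only [integral_const, probReal_univ, one_smul, Pi.pow_apply] at h
  linarith

/-- For `Y ~ N(Φθ₀ + R, σ²Iₙ)` and the least-squares estimator `θ_Y = (ΦᵀΦ)⁻¹ΦᵀY`, if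
`‖ΦᵀΦ − n Iₖ‖₂ < n/2` then `E‖θ_Y − θ₀‖² ≤ 2σ²k/n + 2‖R‖²/n`. -/
theorem stmt3 (n k : ℕ) (hn : 0 < n) (hk : 0 < k) (σ : ℝ) (hσ : 0 < σ)
    (Φ : Matrix (Fin n) (Fin k) ℝ)
    (hΦ : opNorm (Φᵀ * Φ - (n : ℝ) • (1 : Matrix (Fin k) (Fin k) ℝ)) < n / 2)
    (θ0 : Fin k → ℝ) (R : Fin n → ℝ) :
    (∫ y : Fin n → ℝ, (∑ j : Fin k, (((Φᵀ * Φ)⁻¹ * Φᵀ).mulVec y j - θ0 j) ^ 2)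
        ∂(Measure.pi fun i => gaussianReal ((Φ.mulVec θ0 + R) i) (σ ^ 2).toNNReal))
      ≤ 2 * σ ^ 2 * k / n + 2 * (∑ i, R i ^ 2) / n := by
  have hn0 : (0 : ℝ) < n := Nat.cast_pos.mpr hn
  have hc : (0 : ℝ) < n / 2 := by positivity
  have hG := half_mul_dotProduct_le_gram hΦ
  have hdet := isUnit_det_of_coercive hc hG
  set B := (Φᵀ * Φ)⁻¹ * Φᵀ with hB
  have hBΦ : B * Φ = 1 := by rw [hB, Matrix.mul_assoc, nonsing_inv_mul _ hdet]
  have hBB : B * Bᵀ = (Φᵀ * Φ)⁻¹ := by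
    rw [hB, transpose_mul, transpose_transpose, transpose_nonsing_inv, transpose_mul,
      transpose_transpose, Matrix.mul_assoc, ← Matrix.mul_assoc Φᵀ, mul_nonsing_inv _ hdet,
      Matrix.mul_one]
  have hrow : ∀ j, B j ⬝ᵥ B j ≤ (n / 2 : ℝ)⁻¹ := fun j => by
    have h := inv_apply_self_le_of_coercive hc hG j
    rwa [← hBB] at h
  have hbias : ∀ j, B j ⬝ᵥ (Φ *ᵥ θ0 + R) - θ0 j = (B *ᵥ R) j := fun j => by
    have h : (B *ᵥ (Φ *ᵥ θ0 + R)) j = θ0 j + (B *ᵥ R) j := by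
      rw [mulVec_add, mulVec_mulVec, hBΦ, one_mulVec, Pi.add_apply]
    exact sub_eq_of_eq_add' h
  have hrisk := fun j =>
    integral_sq_dotProduct_sub_pi_gaussianReal (B j) (Φ *ᵥ θ0 + R) (σ ^ 2).toNNReal (θ0 j)
  have hRB : (n / 2 : ℝ) * ∑ j, (B *ᵥ R) j ^ 2 ≤ ∑ i, R i ^ 2 := by
    simpa only [dotProduct, ← pow_two] using mul_dotProduct_leastSquares_le hc hG R
  calc _ = ∑ j, (σ ^ 2 * (B j ⬝ᵥ B j) + (B *ᵥ R) j ^ 2) := by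
        refine (integral_finsetSum _ fun j _ => (hrisk j).1).trans ?_
        refine Finset.sum_congr rfl fun j _ => (hrisk j).2.trans ?_
        rw [hbias, Real.coe_toNNReal _ (sq_nonneg σ)]
    _ ≤ ∑ j : Fin k, (σ ^ 2 * (n / 2 : ℝ)⁻¹ + (B *ᵥ R) j ^ 2) := by
        gcongr with j
        exact hrow j
    _ = 2 * σ ^ 2 * k / n + ∑ j, (B *ᵥ R) j ^ 2 := by
        rw [Finset.sum_add_distrib, Finset.sum_const, Finset.card_univ, Fintype.card_fin,
          nsmul_eq_mul]
        field_simp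
    _ ≤ 2 * σ ^ 2 * k / n + 2 * (∑ i, R i ^ 2) / n := by
        gcongr
        rw [le_div_iff₀ hn0]
        linarith
end

section
/- There exists a universal constant C > 0 such that the following holds. Let n, k be positive integers, σ > 0, Φ a real n×k matrix with ‖ΦᵀΦ − n·I_k‖₂ < n/2, Λ = diag(λ₁, …, λ_k) with λ_j > 4/n for each j, θ₀ ∈ ℝ^k and R ∈ ℝⁿ. Let Y ~ N(Φθ₀ + R, σ²·Iₙ), θ_Y = (ΦᵀΦ)⁻¹ Φᵀ Y, and θ̃ = (ΦᵀΦ + Λ⁻¹)⁻¹ Φᵀ Y. Then E‖θ̃ − θ_Y‖² ≤ C·( ‖R‖²/n + ‖Λ^{-1/2}θ₀‖²/n + σ²k/n ). -/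
open MeasureTheory ProbabilityTheory Matrix

section RidgeBounds

variable {m κ : Type*} [Fintype m] [Fintype κ] [DecidableEq κ]

lemma dotProduct_gram_add_diagonal_mulVec (Φ : Matrix m κ ℝ) (d w : κ → ℝ) :
    w ⬝ᵥ (Φᵀ * Φ + diagonal d) *ᵥ w = (Φ *ᵥ w) ⬝ᵥ (Φ *ᵥ w) + ∑ j, d j * w j ^ 2 := by
  rw [add_mulVec, dotProduct_add, ← mulVec_mulVec, dotProduct_mulVec, vecMul_transpose]
  congr 1
  exact Finset.sum_congr rfl fun j _ => by rw [mulVec_diagonal]; ring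

lemma dotProduct_self_mulVec_le {d : κ → ℝ} (hd : ∀ j, 0 ≤ d j) (Φ : Matrix m κ ℝ) (w : κ → ℝ) :
    (Φ *ᵥ w) ⬝ᵥ (Φ *ᵥ w) ≤ w ⬝ᵥ (Φᵀ * Φ + diagonal d) *ᵥ w := by
  rw [dotProduct_gram_add_diagonal_mulVec]
  have := Finset.sum_nonneg fun j (_ : j ∈ Finset.univ) => mul_nonneg (hd j) (sq_nonneg (w j))
  linarith

lemma dotProduct_self_nonneg' {ι : Type*} [Fintype ι] (x : ι → ℝ) : 0 ≤ x ⬝ᵥ x :=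
  Finset.sum_nonneg fun i _ => mul_self_nonneg (x i)

lemma dotProduct_self_sub_smul {ι : Type*} [Fintype ι] (x y : ι → ℝ) (a : ℝ) :
    (x - a • y) ⬝ᵥ (x - a • y) = x ⬝ᵥ x - 2 * a * (y ⬝ᵥ x) + a ^ 2 * (y ⬝ᵥ y) := by
  simp only [sub_dotProduct, dotProduct_sub, smul_dotProduct, dotProduct_smul, smul_eq_mul,
    dotProduct_comm x y]
  ring

lemma dotProduct_self_sub_le {ι : Type*} [Fintype ι] (x y : ι → ℝ) :
    (x - y) ⬝ᵥ (x - y) ≤ 2 * (x ⬝ᵥ x) + 2 * (y ⬝ᵥ y) := by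
  have h := dotProduct_self_nonneg' (x + y)
  simp only [sub_dotProduct, dotProduct_sub, add_dotProduct, dotProduct_add] at h ⊢
  linarith

variable {Φ : Matrix m κ ℝ} {a : ℝ} {d : κ → ℝ}

lemma isUnit_gram_add_diagonal (ha : 0 < a)
    (hΦ : ∀ w, a * (w ⬝ᵥ w) ≤ (Φ *ᵥ w) ⬝ᵥ (Φ *ᵥ w)) (hd : ∀ j, 0 ≤ d j) :
    IsUnit (Φᵀ * Φ + diagonal d) := by
  rw [← mulVec_injective_iff_isUnit]
  refine (injective_iff_map_eq_zero (Φᵀ * Φ + diagonal d).mulVecLin).2 fun w hw => ?_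
  have h := (hΦ w).trans (dotProduct_self_mulVec_le hd Φ w)
  rw [← mulVecLin_apply, hw, dotProduct_zero] at h
  exact dotProduct_self_eq_zero.1
    (le_antisymm (nonpos_of_mul_nonpos_right h ha) (dotProduct_self_nonneg' w))

lemma sq_mul_dotProduct_self_le (ha : 0 < a)
    (hΦ : ∀ w, a * (w ⬝ᵥ w) ≤ (Φ *ᵥ w) ⬝ᵥ (Φ *ᵥ w)) (hd : ∀ j, 0 ≤ d j) (w : κ → ℝ) :
    a ^ 2 * (w ⬝ᵥ w) ≤
      ((Φᵀ * Φ + diagonal d) *ᵥ w) ⬝ᵥ ((Φᵀ * Φ + diagonal d) *ᵥ w) := by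
  have h := (hΦ w).trans (dotProduct_self_mulVec_le hd Φ w)
  have h2 := dotProduct_self_nonneg' ((Φᵀ * Φ + diagonal d) *ᵥ w - a • w)
  rw [dotProduct_self_sub_smul] at h2
  nlinarith

lemma mul_dotProduct_self_mulVec_le (ha : 0 < a)
    (hΦ : ∀ w, a * (w ⬝ᵥ w) ≤ (Φ *ᵥ w) ⬝ᵥ (Φ *ᵥ w)) (hd : ∀ j, 0 ≤ d j) (w : κ → ℝ) :
    a * ((Φ *ᵥ w) ⬝ᵥ (Φ *ᵥ w)) ≤
      ((Φᵀ * Φ + diagonal d) *ᵥ w) ⬝ᵥ ((Φᵀ * Φ + diagonal d) *ᵥ w) := by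
  have h1 := hΦ w
  have h := dotProduct_self_mulVec_le hd Φ w
  have h2 := dotProduct_self_nonneg' ((Φᵀ * Φ + diagonal d) *ᵥ w - a • w)
  rw [dotProduct_self_sub_smul] at h2
  nlinarith

/-- The ridge estimator `(ΦᵀΦ + diag d)⁻¹Φᵀ` has squared operator norm at most `1 / a`. -/
lemma mul_dotProduct_self_ridge_le (ha : 0 < a)
    (hΦ : ∀ w, a * (w ⬝ᵥ w) ≤ (Φ *ᵥ w) ⬝ᵥ (Φ *ᵥ w)) (hd : ∀ j, 0 ≤ d j) (r : m → ℝ) :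
    a * ((((Φᵀ * Φ + diagonal d)⁻¹ * Φᵀ) *ᵥ r) ⬝ᵥ (((Φᵀ * Φ + diagonal d)⁻¹ * Φᵀ) *ᵥ r)) ≤
      r ⬝ᵥ r := by
  set w := ((Φᵀ * Φ + diagonal d)⁻¹ * Φᵀ) *ᵥ r with hw
  have hdet := (isUnit_iff_isUnit_det _).1 (isUnit_gram_add_diagonal ha hΦ hd)
  have hS : (Φᵀ * Φ + diagonal d) *ᵥ w = Φᵀ *ᵥ r := by
    rw [hw, mulVec_mulVec, mul_nonsing_inv_cancel_left _ _ hdet]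
  have h := dotProduct_self_mulVec_le hd Φ w
  rw [hS, dotProduct_mulVec w, vecMul_transpose] at h
  have h2 := dotProduct_self_nonneg' (r - (1 : ℝ) • (Φ *ᵥ w))
  rw [dotProduct_self_sub_smul] at h2
  have h1 := hΦ w
  nlinarith

/-- Each row of `(ΦᵀΦ + diag d)⁻¹Φᵀ` has squared Euclidean norm at most `1 / a`. -/
lemma mul_dotProduct_self_ridge_row_le (ha : 0 < a)
    (hΦ : ∀ w, a * (w ⬝ᵥ w) ≤ (Φ *ᵥ w) ⬝ᵥ (Φ *ᵥ w)) (hd : ∀ j, 0 ≤ d j) (j : κ) :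
    a * (((Φᵀ * Φ + diagonal d)⁻¹ * Φᵀ) j ⬝ᵥ ((Φᵀ * Φ + diagonal d)⁻¹ * Φᵀ) j) ≤ 1 := by
  have hdet := (isUnit_iff_isUnit_det _).1 (isUnit_gram_add_diagonal ha hΦ hd)
  set S := Φᵀ * Φ + diagonal d with hSdef
  have hsymm : Sᵀ = S := by simp [hSdef]
  have hrow : (S⁻¹ * Φᵀ) j = Φ *ᵥ (S⁻¹ j) := by
    ext i
    simp [mul_apply, mulVec, dotProduct, mul_comm]
  have hS : S *ᵥ (S⁻¹ j) = Pi.single j 1 := by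
    rw [← vecMul_transpose, hsymm]
    change (S⁻¹ * S) j = _
    rw [nonsing_inv_mul _ hdet]
    ext i
    simp [one_apply, Pi.single_apply, eq_comm]
  have h := mul_dotProduct_self_mulVec_le ha hΦ hd (S⁻¹ j)
  rw [← hSdef, hS] at h
  rw [hrow]
  simpa using h

/-- Bias of the ridge estimator on the exact signal `Φθ`. -/
lemma sq_mul_ridge_bias_le (ha : 0 < a)
    (hΦ : ∀ w, a * (w ⬝ᵥ w) ≤ (Φ *ᵥ w) ⬝ᵥ (Φ *ᵥ w)) (hd : ∀ j, 0 ≤ d j) (θ : κ → ℝ) :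
    a ^ 2 * ((((Φᵀ * Φ + diagonal d)⁻¹ * Φᵀ) *ᵥ (Φ *ᵥ θ) - θ) ⬝ᵥ
      (((Φᵀ * Φ + diagonal d)⁻¹ * Φᵀ) *ᵥ (Φ *ᵥ θ) - θ)) ≤ ∑ j, (d j * θ j) ^ 2 := by
  have hdet := (isUnit_iff_isUnit_det _).1 (isUnit_gram_add_diagonal ha hΦ hd)
  have h := sq_mul_dotProduct_self_le ha hΦ hd
    (((Φᵀ * Φ + diagonal d)⁻¹ * Φᵀ) *ᵥ (Φ *ᵥ θ) - θ)
  have hS : (Φᵀ * Φ + diagonal d) *ᵥ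
      (((Φᵀ * Φ + diagonal d)⁻¹ * Φᵀ) *ᵥ (Φ *ᵥ θ) - θ) = -(diagonal d *ᵥ θ) := by
    rw [mulVec_sub, mulVec_mulVec, mul_nonsing_inv_cancel_left _ _ hdet, mulVec_mulVec, add_mulVec]
    abel
  rw [hS] at h
  refine h.trans_eq (Finset.sum_congr rfl fun j _ => ?_)
  rw [Pi.neg_apply, mulVec_diagonal]
  ring

end RidgeBounds

lemma le_dotProduct_self_mulVec_of_opNorm_lt {n k : ℕ} {Φ : Matrix (Fin n) (Fin k) ℝ}
    (hΦ : opNorm (Φᵀ * Φ - (n : ℝ) • (1 : Matrix (Fin k) (Fin k) ℝ)) < n / 2) (w : Fin k → ℝ) :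
    (n / 2 : ℝ) * (w ⬝ᵥ w) ≤ (Φ *ᵥ w) ⬝ᵥ (Φ *ᵥ w) := by
  set A := Φᵀ * Φ - (n : ℝ) • (1 : Matrix (Fin k) (Fin k) ℝ) with hA
  set x : EuclideanSpace ℝ (Fin k) := WithLp.toLp 2 w with hx
  have hAw : w ⬝ᵥ A *ᵥ w = (Φ *ᵥ w) ⬝ᵥ (Φ *ᵥ w) - n * (w ⬝ᵥ w) := by
    rw [hA, sub_mulVec, dotProduct_sub, ← mulVec_mulVec, dotProduct_mulVec, vecMul_transpose,
      smul_mulVec, one_mulVec, dotProduct_smul, smul_eq_mul]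
  have hin : inner ℝ x (toEuclideanCLM (𝕜 := ℝ) A x) = w ⬝ᵥ A *ᵥ w := inner_toEuclideanCLM A x x
  have hnorm : ‖x‖ ^ 2 = w ⬝ᵥ w := by
    rw [EuclideanSpace.real_norm_sq_eq]
    exact Finset.sum_congr rfl fun i _ => sq (w i)
  have h1 := neg_le_of_abs_le (abs_real_inner_le_norm x (toEuclideanCLM (𝕜 := ℝ) A x))
  have h2 : ‖toEuclideanCLM (𝕜 := ℝ) A x‖ ≤ n / 2 * ‖x‖ :=
    (toEuclideanCLM (𝕜 := ℝ) A).le_of_opNorm_le hΦ.le x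
  have h3 := mul_le_mul_of_nonneg_left h2 (norm_nonneg x)
  nlinarith

section GaussianSecondMoment

variable {ι : Type*} [Fintype ι] (μ : ι → ℝ) (v : NNReal) (c : ι → ℝ)

lemma memLp_dotProduct_pi_gaussianReal :
    MemLp (fun y => c ⬝ᵥ y) 2 (Measure.pi fun i => gaussianReal (μ i) v) :=
  memLp_finsetSum _ fun i _ =>
    (((memLp_id_gaussianReal' 2 (by simp)).comp_measurePreserving
      (measurePreserving_eval (fun i => gaussianReal (μ i) v) i)).const_mul (c i))

lemma integral_dotProduct_sq_pi_gaussianReal :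
    ∫ y, (c ⬝ᵥ y) ^ 2 ∂(Measure.pi fun i => gaussianReal (μ i) v) =
      (c ⬝ᵥ μ) ^ 2 + v * (c ⬝ᵥ c) := by
  have hmem : ∀ i, MemLp (fun t : ℝ => c i * t) 2 (gaussianReal (μ i) v) := fun i =>
    (memLp_id_gaussianReal' 2 (by simp)).const_mul (c i)
  have hmean : ∫ y, c ⬝ᵥ y ∂(Measure.pi fun i => gaussianReal (μ i) v) = c ⬝ᵥ μ := by
    simp only [dotProduct]
    rw [integral_finsetSum]
    · refine Finset.sum_congr rfl fun i _ => ?_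
      rw [integral_comp_eval (μ := fun i => gaussianReal (μ i) v) (f := fun t : ℝ => c i * t)
        (hmem i).aestronglyMeasurable, integral_const_mul, integral_id_gaussianReal]
    · exact fun i _ => ((hmem i).comp_measurePreserving
        (measurePreserving_eval (fun i => gaussianReal (μ i) v) i)).integrable one_le_two
  have hvar : Var[fun y => c ⬝ᵥ y; Measure.pi fun i => gaussianReal (μ i) v] = v * (c ⬝ᵥ c) := by
    have hsum : (fun y => c ⬝ᵥ y) = ∑ i, fun y : ι → ℝ => c i * y i := by
      ext y
      simp [dotProduct]
    rw [hsum, variance_sum_pi (X := fun i t => c i * t) hmem, dotProduct, Finset.mul_sum]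
    refine Finset.sum_congr rfl fun i _ => ?_
    rw [variance_const_mul (c i) (fun t => t), variance_fun_id_gaussianReal]
    ring
  have h := variance_eq_sub (memLp_dotProduct_pi_gaussianReal μ v c)
  rw [hmean, hvar] at h
  simp only [Pi.pow_apply] at h
  linarith

lemma integral_sum_mulVec_sq_pi_gaussianReal {κ : Type*} [Fintype κ] (M : Matrix κ ι ℝ) :
    ∫ y, ∑ j, (M *ᵥ y) j ^ 2 ∂(Measure.pi fun i => gaussianReal (μ i) v) =
      (M *ᵥ μ) ⬝ᵥ (M *ᵥ μ) + v * ∑ j, M j ⬝ᵥ M j := by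
  have hint : ∀ j ∈ Finset.univ, Integrable (fun y => (M *ᵥ y) j ^ 2)
      (Measure.pi fun i => gaussianReal (μ i) v) := fun j _ =>
    (memLp_dotProduct_pi_gaussianReal μ v (M j)).integrable_sq
  rw [integral_finsetSum _ hint, Finset.mul_sum, dotProduct, ← Finset.sum_add_distrib]
  refine Finset.sum_congr rfl fun j _ => ?_
  rw [← sq]
  exact integral_dotProduct_sq_pi_gaussianReal μ v (M j)

end GaussianSecondMoment

/-- There is a universal constant `C > 0` such that for `Y ~ N(Φθ₀ + R, σ²Iₙ)`,
`θ_Y = (ΦᵀΦ)⁻¹ΦᵀY` and the ridge-type estimator `θ̃ = (ΦᵀΦ + Λ⁻¹)⁻¹ΦᵀY` with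
`Λ = diag(λ₁,…,λₖ)`, `λⱼ > 4/n`, if `‖ΦᵀΦ − n Iₖ‖₂ < n/2` then
`E‖θ̃ − θ_Y‖² ≤ C (‖R‖²/n + ‖Λ^{-1/2}θ₀‖²/n + σ²k/n)`. -/
theorem stmt4 :
    ∃ C : ℝ, 0 < C ∧
      ∀ (n k : ℕ) (_hn : 0 < n) (_hk : 0 < k) (σ : ℝ) (_hσ : 0 < σ)
        (Φ : Matrix (Fin n) (Fin k) ℝ)
        (_hΦ : opNorm (Φᵀ * Φ - (n : ℝ) • (1 : Matrix (Fin k) (Fin k) ℝ)) < n / 2)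
        (lam : Fin k → ℝ) (_hlam : ∀ j, 4 / (n : ℝ) < lam j)
        (θ0 : Fin k → ℝ) (R : Fin n → ℝ),
        (∫ y : Fin n → ℝ,
            (∑ j : Fin k,
              (((Φᵀ * Φ + (Matrix.diagonal lam)⁻¹)⁻¹ * Φᵀ).mulVec y j
                - ((Φᵀ * Φ)⁻¹ * Φᵀ).mulVec y j) ^ 2)
            ∂(Measure.pi fun i => gaussianReal ((Φ.mulVec θ0 + R) i) (σ ^ 2).toNNReal))
          ≤ C * ((∑ i, R i ^ 2) / n + (∑ j, θ0 j ^ 2 / lam j) / n + σ ^ 2 * k / n) := by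
  refine ⟨16, by norm_num, fun n k hn _ σ _ Φ hΦ lam hlam θ R => ?_⟩
  have hn' : (0 : ℝ) < n := Nat.cast_pos.2 hn
  have ha : (0 : ℝ) < n / 2 := by positivity
  have hlow := le_dotProduct_self_mulVec_of_opNorm_lt hΦ
  have hlam0 : ∀ j, 0 < lam j := fun j => (by positivity : (0 : ℝ) < 4 / n).trans (hlam j)
  have hinv : (diagonal lam)⁻¹ = diagonal fun j => (lam j)⁻¹ := by
    refine inv_eq_right_inv ?_
    rw [diagonal_mul_diagonal, ← diagonal_one]
    exact congrArg _ (funext fun j => mul_inv_cancel₀ (hlam0 j).ne')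
  have hd : ∀ j, 0 ≤ (lam j)⁻¹ := fun j => (inv_pos.2 (hlam0 j)).le
  have hd0 : ∀ j : Fin k, (0 : ℝ) ≤ (0 : Fin k → ℝ) j := fun _ => le_rfl
  have hzero : Φᵀ * Φ = Φᵀ * Φ + diagonal (0 : Fin k → ℝ) := by simp
  set A := (Φᵀ * Φ + diagonal fun j => (lam j)⁻¹)⁻¹ * Φᵀ with hA
  set B := (Φᵀ * Φ)⁻¹ * Φᵀ with hB
  have hBθ : B *ᵥ (Φ *ᵥ θ) = θ := by
    have hdet := (isUnit_iff_isUnit_det _).1 (isUnit_gram_add_diagonal ha hlow hd0)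
    rw [← hzero] at hdet
    rw [hB, mulVec_mulVec, Matrix.mul_assoc, nonsing_inv_mul _ hdet, one_mulVec]
  have hrow : ∀ j, (A - B) j ⬝ᵥ (A - B) j ≤ 8 / n := fun j => by
    have h1 := mul_dotProduct_self_ridge_row_le ha hlow hd j
    have h2 := mul_dotProduct_self_ridge_row_le ha hlow hd0 j
    rw [← hzero] at h2
    have h3 := dotProduct_self_sub_le (A j) (B j)
    rw [le_div_iff₀ hn']
    change (A j - B j) ⬝ᵥ (A j - B j) * n ≤ 8
    nlinarith
  have hR : (A - B) *ᵥ R ⬝ᵥ (A - B) *ᵥ R ≤ 8 * (R ⬝ᵥ R) / n := by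
    have h1 := mul_dotProduct_self_ridge_le ha hlow hd R
    have h2 := mul_dotProduct_self_ridge_le ha hlow hd0 R
    rw [← hzero] at h2
    have h3 := dotProduct_self_sub_le (A *ᵥ R) (B *ᵥ R)
    rw [le_div_iff₀ hn', sub_mulVec]
    nlinarith
  have hθ : (A - B) *ᵥ (Φ *ᵥ θ) ⬝ᵥ (A - B) *ᵥ (Φ *ᵥ θ) ≤ (∑ j, θ j ^ 2 / lam j) / n := by
    have h1 := sq_mul_ridge_bias_le ha hlow hd θ
    have h2 : ∑ j, ((lam j)⁻¹ * θ j) ^ 2 ≤ n / 4 * ∑ j, θ j ^ 2 / lam j := by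
      rw [Finset.mul_sum]
      refine Finset.sum_le_sum fun j _ => ?_
      have h3 : (lam j)⁻¹ ≤ n / 4 := by
        rw [← inv_div]
        exact inv_anti₀ (by positivity) (hlam j).le
      calc ((lam j)⁻¹ * θ j) ^ 2 = (lam j)⁻¹ * (θ j ^ 2 / lam j) := by ring
        _ ≤ n / 4 * (θ j ^ 2 / lam j) :=
          mul_le_mul_of_nonneg_right h3 (div_nonneg (sq_nonneg _) (hlam0 j).le)
    rw [sub_mulVec, hBθ, le_div_iff₀ hn']
    have h4 := h1.trans h2
    refine le_of_mul_le_mul_left ?_ (by positivity : (0 : ℝ) < n / 4)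
    rw [← hA] at h4
    linarith
  have hint := integral_sum_mulVec_sq_pi_gaussianReal (Φ *ᵥ θ + R) (σ ^ 2).toNNReal (A - B)
  rw [Real.coe_toNNReal _ (sq_nonneg σ)] at hint
  have hmean : (A - B) *ᵥ (Φ *ᵥ θ + R) ⬝ᵥ (A - B) *ᵥ (Φ *ᵥ θ + R) ≤
      2 * ((∑ j, θ j ^ 2 / lam j) / n) + 2 * (8 * (R ⬝ᵥ R) / n) := by
    have h := dotProduct_self_sub_le ((A - B) *ᵥ (Φ *ᵥ θ)) (-((A - B) *ᵥ R))
    rw [sub_neg_eq_add, neg_dotProduct_neg, ← mulVec_add] at h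
    linarith
  have hnoise : σ ^ 2 * ∑ j, (A - B) j ⬝ᵥ (A - B) j ≤ σ ^ 2 * (k * (8 / n)) := by
    refine mul_le_mul_of_nonneg_left ?_ (sq_nonneg σ)
    simpa using Finset.sum_le_sum fun j (_ : j ∈ Finset.univ) => hrow j
  have hRR : R ⬝ᵥ R = ∑ i, R i ^ 2 := Finset.sum_congr rfl fun i _ => (sq (R i)).symm
  have hθ0 : 0 ≤ (∑ j, θ j ^ 2 / lam j) / n :=
    div_nonneg (Finset.sum_nonneg fun j _ => div_nonneg (sq_nonneg _) (hlam0 j).le) hn'.le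
  have hσ0 : 0 ≤ σ ^ 2 * k / n := by positivity
  rw [hinv, ← hA]
  simp only [sub_mulVec, Pi.sub_apply] at hint
  rw [hint, ← sub_mulVec]
  rw [hRR] at hmean
  calc _ ≤ _ := add_le_add hmean hnoise
    _ = 16 * ((∑ i, R i ^ 2) / n) + 2 * ((∑ j, θ j ^ 2 / lam j) / n) + 8 * (σ ^ 2 * k / n) := by
      ring
    _ ≤ _ := by linarith
end

section
/- There exist universal constants C > 0 and v₀ ≥ e such that the following holds. Let v ≥ v₀ and let G be an integrable real random variable satisfying E G ≥ −v/2 and, for every t ∈ (0, 1/2), E e^{2tG} ≤ exp( 2t·E G + 2t²·v ). Then P( G ≤ −v ) ≤ C · log(v)/√v. -/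
open MeasureTheory

/-- A centred random variable `X` with `E e^{sX} ≤ M` for some `s > 0` satisfies the lower tail
bound `a · P(X ≤ -a) ≤ M / s`. -/
lemma mul_measureReal_le_neg_of_integral_exp_le {Ω : Type*} [MeasurableSpace Ω] {μ : Measure Ω}
    {X : Ω → ℝ} {s M a : ℝ} (hs : 0 < s) (hX : Integrable X μ) (hmean : ∫ ω, X ω ∂μ = 0)
    (hexp : Integrable (fun ω => Real.exp (s * X ω)) μ)
    (hM : ∫ ω, Real.exp (s * X ω) ∂μ ≤ M) (ha : 0 < a) :
    a * μ.real {ω | X ω ≤ -a} ≤ M / s := by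
  have hint : Integrable (fun ω => Real.exp (s * X ω) / s - X ω) μ := (hexp.div_const s).sub hX
  have hnonneg (ω : Ω) : 0 ≤ Real.exp (s * X ω) / s - X ω := by
    rw [sub_nonneg, le_div_iff₀ hs]
    linarith [Real.add_one_le_exp (s * X ω)]
  have hsub : {ω | X ω ≤ -a} ⊆ {ω | a ≤ Real.exp (s * X ω) / s - X ω} := fun ω hω => by
    have hpos : 0 < Real.exp (s * X ω) / s := by positivity
    simp only [Set.mem_ofPred_eq] at hω ⊢
    linarith
  have hfin : μ {ω | a ≤ Real.exp (s * X ω) / s - X ω} ≠ ⊤ := (hint.measure_ge_lt_top ha).ne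
  calc a * μ.real {ω | X ω ≤ -a}
      ≤ a * μ.real {ω | a ≤ Real.exp (s * X ω) / s - X ω} := by
        gcongr
    _ ≤ ∫ ω, (Real.exp (s * X ω) / s - X ω) ∂μ :=
        mul_meas_ge_le_integral_of_nonneg (.of_forall hnonneg) hint a
    _ = (∫ ω, Real.exp (s * X ω) ∂μ) / s := by
        rw [integral_sub (hexp.div_const s) hX, hmean, sub_zero, integral_div]
    _ ≤ M / s := by gcongr

/-- There exist universal constants `C > 0` and `v₀ ≥ e` such that: if `G` is an integrable
real random variable on a probability space with `E G ≥ −v/2` and moment generating function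
bound `E e^{2tG} ≤ exp(2t·EG + 2t²v)` for all `t ∈ (0, 1/2)`, where `v ≥ v₀`, then
`P(G ≤ −v) ≤ C log(v)/√v`. -/
theorem stmt9 :
    ∃ C v₀ : ℝ, 0 < C ∧ Real.exp 1 ≤ v₀ ∧
      ∀ (Ω : Type) (_ : MeasurableSpace Ω) (μ : Measure Ω) (_ : IsProbabilityMeasure μ)
        (G : Ω → ℝ) (_hG : Integrable G μ) (v : ℝ) (_hv : v₀ ≤ v)
        (_hmean : -v / 2 ≤ ∫ ω, G ω ∂μ)
        (_hmgf : ∀ t : ℝ, 0 < t → t < 1 / 2 →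
          ∫⁻ ω, ENNReal.ofReal (Real.exp (2 * t * G ω)) ∂μ
            ≤ ENNReal.ofReal (Real.exp (2 * t * (∫ ω, G ω ∂μ) + 2 * t ^ 2 * v))),
        μ {ω | G ω ≤ -v} ≤ ENNReal.ofReal (C * Real.log v / Real.sqrt v) := by
  refine ⟨2 * Real.exp (1 / 2), Real.exp 1, by positivity, le_rfl, ?_⟩
  intro Ω _ μ _ G hG v hv hmean hmgf
  have hv1 : 1 < v := lt_of_lt_of_le (Real.one_lt_exp_iff.mpr one_pos) hv
  have hv0 : 0 < v := by linarith
  have hlog : 1 ≤ Real.log v := (Real.le_log_iff_exp_le hv0).mpr hv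
  set m := ∫ ω, G ω ∂μ with hm
  set r := Real.sqrt v with hr
  have hr1 : 1 < r := by rwa [hr, Real.lt_sqrt zero_le_one, one_pow]
  have hr0 : 0 < r := by linarith
  have hrv : r ^ 2 = v := Real.sq_sqrt hv0.le
  have hbound := hmgf (1 / (2 * r)) (by positivity)
    (by rw [div_lt_div_iff₀ (by positivity) two_pos]; linarith)
  rw [show 2 * (1 / (2 * r)) = 1 / r by field_simp,
    show 2 * (1 / (2 * r)) ^ 2 * v = 1 / 2 by rw [← hrv]; field_simp] at hbound
  have hmeas : AEStronglyMeasurable (fun ω => Real.exp (1 / r * G ω)) μ :=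
    Real.continuous_exp.comp_aestronglyMeasurable (hG.1.const_mul _)
  have hexpG : Integrable (fun ω => Real.exp (1 / r * G ω)) μ :=
    (lintegral_ofReal_ne_top_iff_integrable hmeas (.of_forall fun _ => (Real.exp_pos _).le)).mp
      (ne_top_of_le_ne_top ENNReal.ofReal_ne_top hbound)
  have hintG : ∫ ω, Real.exp (1 / r * G ω) ∂μ ≤ Real.exp (1 / r * m + 1 / 2) := by
    rw [← ofReal_integral_eq_lintegral_ofReal hexpG (.of_forall fun _ => (Real.exp_pos _).le)]
      at hbound
    exact (ENNReal.ofReal_le_ofReal_iff (Real.exp_pos _).le).mp hbound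
  have hshift : (fun ω => Real.exp (1 / r * (G ω - m)))
      = fun ω => Real.exp (-(1 / r * m)) * Real.exp (1 / r * G ω) := by
    funext ω
    rw [← Real.exp_add]
    ring_nf
  have htail := mul_measureReal_le_neg_of_integral_exp_le (X := fun ω => G ω - m)
    (M := Real.exp (1 / 2)) (a := v / 2) (one_div_pos.mpr hr0) (hG.sub (integrable_const m))
    (by rw [integral_sub hG (integrable_const m)]; simp [hm])
    (by rw [hshift]; exact hexpG.const_mul _)
    (by
      rw [hshift, integral_const_mul]
      calc _ ≤ Real.exp (-(1 / r * m)) * Real.exp (1 / r * m + 1 / 2) := by gcongr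
        _ = Real.exp (1 / 2) := by rw [← Real.exp_add]; ring_nf)
    (half_pos hv0)
  have hsub : {ω | G ω ≤ -v} ⊆ {ω | G ω - m ≤ -(v / 2)} := fun ω hω => by
    simp only [Set.mem_ofPred_eq] at hω ⊢
    linarith
  refine (measure_mono hsub).trans ?_
  rw [← ofReal_measureReal]
  refine ENNReal.ofReal_le_ofReal ?_
  rw [div_div_eq_mul_div, div_one] at htail
  rw [le_div_iff₀ hr0]
  refine le_of_mul_le_mul_right ?_ hr0
  rw [mul_assoc (μ.real _), ← sq, hrv]
  have hlog_mul := mul_le_mul_of_nonneg_left hlog (mul_pos (Real.exp_pos (1 / 2)) hr0).le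
  linarith
end

section
/- Let j be a nonnegative integer and z a real number with z > 0 and z² > j. Then |H_j(z)| ≤ √2 · 2^j · z^j, where H_j is the j-th physicist's Hermite polynomial. -/
/-- The `j`-th physicist's Hermite polynomial, `H_j(x) = 2^{j/2}·he_j(√2 x)` where `he_j`
is the probabilist's Hermite polynomial. -/
noncomputable def physHermite (j : ℕ) (x : ℝ) : ℝ :=
  (2 : ℝ) ^ ((j : ℝ) / 2) * Polynomial.aeval (Real.sqrt 2 * x) (Polynomial.hermite j)

open Polynomial in
theorem derivative_hermite_succ (n : ℕ) :
    derivative (hermite (n + 1)) = ((n : ℤ[X]) + 1) * hermite n := by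
  induction n with
  | zero => simp
  | succ n ih =>
    have hderiv : derivative (derivative (hermite (n + 1))) =
        ((n : ℤ[X]) + 1) * derivative (hermite n) := by
      rw [ih]
      simp
    rw [hermite_succ (n + 1), derivative_sub, derivative_mul, derivative_X, hderiv, ih,
      hermite_succ n]
    push_cast
    ring

open Polynomial in
theorem aeval_hermite_add_two (n : ℕ) (y : ℝ) :
    aeval y (hermite (n + 2)) =
      y * aeval y (hermite (n + 1)) - (n + 1) * aeval y (hermite n) := by
  rw [hermite_succ (n + 1), derivative_hermite_succ]
  simp

/-- The hexagon `|a| ≤ 1`, `|a - b| ≤ 1 / 2`, `|2 * a - 3 * b| ≤ 1` is mapped into itself by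
`(a, b) ↦ (b, b - t * a)` for every `t ∈ [0, 1 / 2]`. -/
theorem hexagon_invariant {a b t : ℝ} (ht : 0 ≤ t) (ht' : t ≤ 1 / 2)
    (h : |a| ≤ 1 ∧ |a - b| ≤ 1 / 2 ∧ |2 * a - 3 * b| ≤ 1) :
    |b| ≤ 1 ∧ |b - (b - t * a)| ≤ 1 / 2 ∧ |2 * b - 3 * (b - t * a)| ≤ 1 := by
  simp only [abs_le] at h ⊢
  obtain ⟨⟨h1, h2⟩, ⟨h3, h4⟩, h5, h6⟩ := h
  refine ⟨⟨by linarith, by linarith⟩, ⟨by nlinarith, by nlinarith⟩, ?_, ?_⟩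
  · nlinarith [mul_nonneg ht (by linarith : 0 ≤ 3 * a - 2 * b + 2),
      mul_nonneg (sub_nonneg.2 ht') (by linarith : 0 ≤ 1 - b)]
  · nlinarith [mul_nonneg ht (by linarith : 0 ≤ 2 - (3 * a - 2 * b)),
      mul_nonneg (sub_nonneg.2 ht') (by linarith : 0 ≤ 1 + b)]

theorem abs_le_one_of_recurrence {N : ℕ} {b t : ℕ → ℝ} (h0 : b 0 = 1) (h1 : b 1 = 1)
    (hrec : ∀ n, b (n + 2) = b (n + 1) - t n * b n)
    (ht : ∀ n, n + 2 ≤ N → 0 ≤ t n ∧ t n ≤ 1 / 2) : |b N| ≤ 1 := by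
  have key : ∀ n, n + 1 ≤ N →
      |b n| ≤ 1 ∧ |b n - b (n + 1)| ≤ 1 / 2 ∧ |2 * b n - 3 * b (n + 1)| ≤ 1 := by
    intro n
    induction n with
    | zero => intro _; norm_num [h0, h1]
    | succ n ih =>
      intro hn
      rw [hrec n]
      exact hexagon_invariant (ht n hn).1 (ht n hn).2 (ih (by omega))
  cases N with
  | zero => simp [h0]
  | succ n =>
    exact (hexagon_invariant le_rfl (by norm_num) (key n le_rfl)).1

open Polynomial in
theorem abs_aeval_hermite_le_pow {j : ℕ} {y : ℝ} (hy : 0 < y) (hj : 2 * (j : ℝ) ≤ y ^ 2) :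
    |aeval y (hermite j)| ≤ y ^ j := by
  have h := abs_le_one_of_recurrence (N := j) (b := fun n => aeval y (hermite n) / y ^ n)
    (t := fun n => ((n : ℝ) + 1) / y ^ 2) (by simp) (by simp [hy.ne'])
    (fun n => by
      rw [aeval_hermite_add_two]
      field_simp
      ring)
    (fun n hn => by
      have hn' : (n : ℝ) + 2 ≤ j := by exact_mod_cast hn
      refine ⟨by positivity, ?_⟩
      rw [div_le_iff₀ (by positivity)]
      linarith)
  rwa [abs_div, abs_of_pos (pow_pos hy j), div_le_one (pow_pos hy j)] at h

/-- If `z > 0` and `z² > j` then `|H_j(z)| ≤ √2 · 2ʲ · zʲ`. -/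
theorem stmt12 (j : ℕ) (z : ℝ) (hz : 0 < z) (hz2 : (j : ℝ) < z ^ 2) :
    |physHermite j z| ≤ Real.sqrt 2 * 2 ^ j * z ^ j := by
  have hsq : Real.sqrt 2 ^ 2 = 2 := Real.sq_sqrt (by norm_num)
  have hbound : |Polynomial.aeval (Real.sqrt 2 * z) (Polynomial.hermite j)| ≤
      (Real.sqrt 2 * z) ^ j :=
    abs_aeval_hermite_le_pow (by positivity) (by rw [mul_pow, hsq]; linarith)
  have hpow : (2 : ℝ) ^ ((j : ℝ) / 2) = Real.sqrt 2 ^ j := by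
    rw [Real.sqrt_eq_rpow, ← Real.rpow_natCast, ← Real.rpow_mul (by norm_num)]
    ring_nf
  have hone : (1 : ℝ) ≤ Real.sqrt 2 := Real.one_le_sqrt.2 (by norm_num)
  rw [physHermite, hpow, abs_mul, abs_of_pos (by positivity)]
  calc Real.sqrt 2 ^ j * |Polynomial.aeval (Real.sqrt 2 * z) (Polynomial.hermite j)|
      ≤ Real.sqrt 2 ^ j * (Real.sqrt 2 * z) ^ j := by gcongr
    _ = 1 * (2 ^ j * z ^ j) := by
      rw [mul_pow, ← mul_assoc, ← mul_pow, ← sq, hsq, one_mul]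
    _ ≤ Real.sqrt 2 * (2 ^ j * z ^ j) := by gcongr
    _ = Real.sqrt 2 * 2 ^ j * z ^ j := by ring
end

section
/- Let j be a nonnegative integer and z > 0 a real number. Then |H_j(z)| ≤ (2^{j+1} · z^{j+1} / √π) · ∫₀^∞ (1 + t²)^{j/2} · e^{−z²t²} dt, where H_j is the j-th physicist's Hermite polynomial. -/
open MeasureTheory

/-- The derivative of a probabilist's Hermite polynomial. -/
theorem derivative_hermite_succ_s13 (n : ℕ) :
    Polynomial.derivative (Polynomial.hermite (n + 1))
      = ((n : Polynomial ℤ) + 1) * Polynomial.hermite n := by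
  induction n with
  | zero => simp
  | succ n ih =>
    rw [Polynomial.hermite_succ (n + 1), Polynomial.derivative_sub, Polynomial.derivative_mul, ih,
      Polynomial.hermite_succ n]
    simp only [Polynomial.derivative_X, Polynomial.derivative_mul, Polynomial.derivative_add,
      Polynomial.derivative_natCast, Polynomial.derivative_one]
    push_cast
    ring

/-- The three-term recurrence for the probabilist's Hermite polynomials. -/
theorem hermite_add_two (n : ℕ) :
    Polynomial.hermite (n + 2)
      = Polynomial.X * Polynomial.hermite (n + 1)
        - ((n : Polynomial ℤ) + 1) * Polynomial.hermite n := by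
  rw [Polynomial.hermite_succ (n + 1), derivative_hermite_succ_s13]

theorem physHermite_eq_sqrt_pow (j : ℕ) (x : ℝ) :
    physHermite j x
      = Real.sqrt 2 ^ j * Polynomial.aeval (Real.sqrt 2 * x) (Polynomial.hermite j) := by
  rw [physHermite, Real.rpow_div_two_eq_sqrt _ zero_le_two, Real.rpow_natCast]

theorem physHermite_zero (x : ℝ) : physHermite 0 x = 1 := by
  simp [physHermite_eq_sqrt_pow]

theorem physHermite_one (x : ℝ) : physHermite 1 x = 2 * x := by
  simp [physHermite_eq_sqrt_pow, ← mul_assoc]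

/-- The three-term recurrence for the physicist's Hermite polynomials. -/
theorem physHermite_add_two (n : ℕ) (x : ℝ) :
    physHermite (n + 2) x
      = 2 * x * physHermite (n + 1) x - 2 * (n + 1) * physHermite n x := by
  have h2 : Real.sqrt 2 ^ 2 = 2 := Real.sq_sqrt zero_le_two
  simp only [physHermite_eq_sqrt_pow, hermite_add_two, map_sub, map_mul, map_add, map_natCast,
    map_one, Polynomial.aeval_X, pow_succ _ (n + 1), pow_succ _ n]
  linear_combination
    (x * Real.sqrt 2 ^ n * Real.sqrt 2
        * Polynomial.aeval (Real.sqrt 2 * x) (Polynomial.hermite (n + 1))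
      - Real.sqrt 2 ^ n * (n + 1) * Polynomial.aeval (Real.sqrt 2 * x) (Polynomial.hermite n)) * h2

/-- The integrand `(1 + it)ⁿ e^{-bt²}` of the integral representation of `H_n`. -/
noncomputable def hermiteKernel (b : ℝ) (n : ℕ) (t : ℝ) : ℂ :=
  (1 + Complex.I * t) ^ n * (Real.exp (-b * t ^ 2) : ℂ)

theorem norm_hermiteKernel (b : ℝ) (n : ℕ) (t : ℝ) :
    ‖hermiteKernel b n t‖ = (1 + t ^ 2) ^ ((n : ℝ) / 2) * Real.exp (-b * t ^ 2) := by
  have h : ‖1 + Complex.I * (t : ℂ)‖ = Real.sqrt (1 + t ^ 2) := by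
    have := Complex.norm_add_mul_I 1 t
    rw [mul_comm Complex.I]
    simpa using this
  rw [hermiteKernel, norm_mul, norm_pow, h, Complex.norm_of_nonneg (Real.exp_pos _).le,
    Real.rpow_div_two_eq_sqrt _ (by positivity), Real.rpow_natCast]

theorem integrable_hermiteKernel {b : ℝ} (hb : 0 < b) (n : ℕ) :
    Integrable (hermiteKernel b n) := by
  have h : ∀ k : ℕ, Integrable fun t : ℝ => (t : ℂ) ^ k * hermiteKernel b n t := by
    induction n with
    | zero =>
      intro k
      have := (integrable_rpow_mul_exp_neg_mul_sq hb
        (s := (k : ℝ)) (by linarith [k.cast_nonneg (α := ℝ)])).ofReal (𝕜 := ℂ)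
      refine this.congr (Filter.Eventually.of_forall fun t => ?_)
      simp [hermiteKernel]
    | succ n ih =>
      intro k
      refine ((ih k).add ((ih (k + 1)).const_mul Complex.I)).congr
        (Filter.Eventually.of_forall fun t => ?_)
      simp only [hermiteKernel, Pi.add_apply]
      ring
  simpa using h 0

theorem hasDerivAt_hermiteKernel (b : ℝ) (n : ℕ) (t : ℝ) :
    HasDerivAt (hermiteKernel b n)
      (Complex.I * (n * hermiteKernel b (n - 1) t
        + 2 * b * (hermiteKernel b (n + 1) t - hermiteKernel b n t))) t := by
  have h1 : HasDerivAt (fun t : ℝ => (1 + Complex.I * (t : ℂ))) Complex.I t := by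
    simpa using ((Complex.ofRealCLM.hasDerivAt (x := t)).const_mul Complex.I).const_add 1
  have h2 : HasDerivAt (fun t : ℝ => (Real.exp (-b * t ^ 2) : ℂ))
      ((Real.exp (-b * t ^ 2) * (-b * (2 * t)) : ℝ) : ℂ) t := by
    have := ((hasDerivAt_pow 2 t).const_mul (-b)).exp
    simpa using this.ofReal_comp
  refine ((h1.pow n).mul h2).congr_deriv ?_
  simp only [hermiteKernel, Pi.pow_apply]
  push_cast
  linear_combination (-2 * b * t * (1 + Complex.I * t) ^ n * Complex.exp (-b * t ^ 2))
    * Complex.I_sq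

/-- The recurrence obtained by integrating the derivative of the kernel. -/
theorem integral_hermiteKernel_succ {b : ℝ} (hb : 0 < b) (n : ℕ) :
    2 * b * ∫ t, hermiteKernel b (n + 1) t
      = 2 * b * (∫ t, hermiteKernel b n t) - n * ∫ t, hermiteKernel b (n - 1) t := by
  have hi := integrable_hermiteKernel hb
  have hd : Integrable fun t =>
      2 * (b : ℂ) * (hermiteKernel b (n + 1) t - hermiteKernel b n t) :=
    ((hi (n + 1)).sub (hi n)).const_mul (2 * b : ℂ)
  have hp := (hi (n - 1)).const_mul (n : ℂ)
  have h := integral_eq_zero_of_hasDerivAt_of_integrable (hasDerivAt_hermiteKernel b n)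
    ((hp.add hd).const_mul Complex.I) (hi n)
  rw [integral_const_mul, integral_add hp hd, integral_const_mul, integral_const_mul,
    integral_sub (hi (n + 1)) (hi n)] at h
  have h := (mul_eq_zero.mp h).resolve_left Complex.I_ne_zero
  linear_combination h

theorem integral_hermiteKernel_zero {z : ℝ} (hz : 0 < z) :
    z * ∫ t, hermiteKernel (z ^ 2) 0 t = (Real.sqrt Real.pi : ℂ) := by
  simp only [hermiteKernel, pow_zero, one_mul]
  rw [integral_complex_ofReal, integral_gaussian, Real.sqrt_div Real.pi_pos.le,
    Real.sqrt_sq hz.le]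
  push_cast
  have : (z : ℂ) ≠ 0 := Complex.ofReal_ne_zero.mpr (ne_of_gt hz)
  field_simp

/-- The integral representation of the physicist's Hermite polynomials. -/
theorem physHermite_mul_sqrt_pi {z : ℝ} (hz : 0 < z) (n : ℕ) :
    (physHermite n z : ℂ) * (Real.sqrt Real.pi : ℂ)
      = 2 ^ n * z ^ (n + 1) * ∫ t, hermiteKernel (z ^ 2) n t := by
  have hb : 0 < z ^ 2 := by positivity
  induction n using Nat.twoStepInduction with
  | zero => simp [physHermite_zero, integral_hermiteKernel_zero hz]
  | one =>
    have h := integral_hermiteKernel_succ hb 0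
    have h0 := integral_hermiteKernel_zero hz
    rw [physHermite_one]
    push_cast at h ⊢
    simp only [zero_mul, sub_zero] at h ⊢
    linear_combination (-2 * z : ℂ) * h0 - h
  | more n ih0 ih1 =>
    have h := integral_hermiteKernel_succ hb (n + 1)
    rw [physHermite_add_two]
    simp only [Nat.add_sub_cancel] at h
    push_cast at h ⊢
    linear_combination (2 * z : ℂ) * ih1 - (2 * (n + 1) : ℂ) * ih0
      - (2 : ℂ) ^ (n + 1) * (z : ℂ) ^ (n + 1) * h

/-- For `z > 0`, `|H_j(z)| ≤ (2^{j+1} z^{j+1}/√π) ∫₀^∞ (1+t²)^{j/2} e^{−z²t²} dt`. -/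
theorem stmt13 (j : ℕ) (z : ℝ) (hz : 0 < z) :
    |physHermite j z|
      ≤ (2 ^ (j + 1) * z ^ (j + 1) / Real.sqrt Real.pi)
          * ∫ t in Set.Ioi (0 : ℝ), (1 + t ^ 2) ^ ((j : ℝ) / 2) * Real.exp (-z ^ 2 * t ^ 2) := by
  have hpi : 0 < Real.sqrt Real.pi := Real.sqrt_pos.mpr Real.pi_pos
  have hn := norm_integral_le_integral_norm (μ := volume) (hermiteKernel (z ^ 2) j)
  have heven := integral_comp_abs
    (f := fun t : ℝ => (1 + t ^ 2) ^ ((j : ℝ) / 2) * Real.exp (-z ^ 2 * t ^ 2))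
  simp only [sq_abs] at heven
  simp only [norm_hermiteKernel] at hn
  rw [heven] at hn
  have h := congrArg norm (physHermite_mul_sqrt_pi hz j)
  simp only [norm_mul, norm_pow, Complex.norm_real, Real.norm_eq_abs, abs_of_pos hpi,
    abs_of_pos hz, Complex.norm_two] at h
  rw [div_mul_eq_mul_div, le_div_iff₀ hpi, h, pow_succ 2 j]
  calc _ ≤ _ := mul_le_mul_of_nonneg_left hn (by positivity)
    _ = _ := by ring
end

section
/- Let n ≥ 1 be an integer, α₁, …, αₙ > 0 real numbers with s = Σ_{j=1}^n α_j, and ψ : (0,1] → ℝ a measurable function such that t ↦ ψ(t)·t^{s−1} is Lebesgue integrable on (0,1]. Then ∫_{S} ψ(Σ_{j=1}^n x_j) · Π_{j=1}^n x_j^{α_j − 1} dx = ( Π_{j=1}^n Γ(α_j) / Γ(s) ) · ∫₀¹ ψ(t) · t^{s−1} dt, where S = { x ∈ ℝⁿ : x_j > 0 for all j, Σ_{j=1}^n x_j ≤ 1 }. -/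
open MeasureTheory

/-- The normalized power density `t ^ (a - 1) / Γ(a)` on the positive half-line. -/
noncomputable def powerDensity (a t : ℝ) : ℝ :=
  if 0 < t then t ^ (a - 1) / Real.Gamma a else 0

lemma powerDensity_of_pos {t : ℝ} (a : ℝ) (ht : 0 < t) :
    powerDensity a t = t ^ (a - 1) / Real.Gamma a := if_pos ht

lemma powerDensity_of_nonpos {t : ℝ} (a : ℝ) (ht : t ≤ 0) : powerDensity a t = 0 :=
  if_neg ht.not_gt

lemma powerDensity_nonneg {a : ℝ} (ha : 0 < a) (t : ℝ) : 0 ≤ powerDensity a t := by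
  unfold powerDensity
  split_ifs with ht
  · exact div_nonneg (Real.rpow_nonneg ht.le _) (Real.Gamma_pos_of_pos ha).le
  · exact le_rfl

@[fun_prop]
lemma measurable_powerDensity (a : ℝ) : Measurable (powerDensity a) :=
  Measurable.ite measurableSet_Ioi (by fun_prop) (by fun_prop)

lemma lintegral_comp_const_mul {t : ℝ} (ht : 0 < t) {f : ℝ → ENNReal} (hf : Measurable f) :
    ∫⁻ y, f y = ENNReal.ofReal t * ∫⁻ u, f (t * u) := by
  conv_lhs => rw [← Real.smul_map_volume_mul_left ht.ne']
  rw [lintegral_smul_measure, lintegral_map hf (by fun_prop), abs_of_pos ht, smul_eq_mul]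

lemma powerDensity_mul_powerDensity_eq_betaPDFReal {a b t : ℝ} (ha : 0 < a) (hb : 0 < b)
    (ht : 0 < t) (u : ℝ) :
    t * (powerDensity a (t * u) * powerDensity b (t - t * u)) =
      powerDensity (a + b) t * ProbabilityTheory.betaPDFReal a b u := by
  have hsub : t - t * u = t * (1 - u) := by ring
  rw [hsub]
  by_cases hu : 0 < u ∧ u < 1
  · have hu' : 0 < 1 - u := by linarith [hu.2]
    have hΓa := (Real.Gamma_pos_of_pos ha).ne'
    have hΓb := (Real.Gamma_pos_of_pos hb).ne'
    have hΓab := (Real.Gamma_pos_of_pos (add_pos ha hb)).ne'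
    have hpow : t ^ (a + b - 1) = t * t ^ (a - 1) * t ^ (b - 1) := by
      rw [show a + b - 1 = 1 + (a - 1) + (b - 1) by ring, Real.rpow_add ht, Real.rpow_add ht,
        Real.rpow_one]
    rw [powerDensity_of_pos _ (mul_pos ht hu.1), powerDensity_of_pos _ (mul_pos ht hu'),
      powerDensity_of_pos _ ht, ProbabilityTheory.betaPDFReal, if_pos hu, ProbabilityTheory.beta,
      Real.mul_rpow ht.le hu.1.le, Real.mul_rpow ht.le hu'.le, hpow]
    field_simp
  · rw [ProbabilityTheory.betaPDFReal, if_neg hu, mul_zero]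
    rcases not_and_or.mp hu with h | h
    · rw [powerDensity_of_nonpos _ (mul_nonpos_of_nonneg_of_nonpos ht.le (not_lt.mp h))]
      ring
    · rw [powerDensity_of_nonpos b
        (mul_nonpos_of_nonneg_of_nonpos ht.le (by linarith [not_lt.mp h]))]
      ring

/-- The normalized power densities form a convolution semigroup. -/
lemma lintegral_powerDensity_mul_powerDensity_sub {a b : ℝ} (ha : 0 < a) (hb : 0 < b) (t : ℝ) :
    ∫⁻ y, ENNReal.ofReal (powerDensity a y) * ENNReal.ofReal (powerDensity b (t - y)) =
      ENNReal.ofReal (powerDensity (a + b) t) := by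
  rcases le_or_gt t 0 with ht | ht
  · rw [powerDensity_of_nonpos _ ht, ENNReal.ofReal_zero, lintegral_eq_zero_iff (by fun_prop)]
    refine Filter.Eventually.of_forall fun y => ?_
    rcases le_or_gt y 0 with hy | hy
    · simp [powerDensity_of_nonpos a hy]
    · simp [powerDensity_of_nonpos b (show t - y ≤ 0 by linarith)]
  · rw [lintegral_comp_const_mul ht (by fun_prop), ← lintegral_const_mul _ (by fun_prop)]
    calc
      _ = ∫⁻ u, ENNReal.ofReal (powerDensity (a + b) t) * ProbabilityTheory.betaPDF a b u := by
        refine lintegral_congr fun u => ?_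
        rw [ProbabilityTheory.betaPDF,
          ← ENNReal.ofReal_mul (powerDensity_nonneg (add_pos ha hb) t),
          ← ENNReal.ofReal_mul (powerDensity_nonneg ha _), ← ENNReal.ofReal_mul ht.le,
          powerDensity_mul_powerDensity_eq_betaPDFReal ha hb ht]
      _ = _ := by
        rw [lintegral_const_mul' _ _ ENNReal.ofReal_ne_top,
          ProbabilityTheory.lintegral_betaPDF_eq_one ha hb, mul_one]

lemma lintegral_lintegral_add_powerDensity {a b : ℝ} (ha : 0 < a) (hb : 0 < b)
    {F : ℝ → ENNReal} (hF : Measurable F) :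
    ∫⁻ y, ENNReal.ofReal (powerDensity a y) *
        ∫⁻ t, F (y + t) * ENNReal.ofReal (powerDensity b t) =
      ∫⁻ t, F t * ENNReal.ofReal (powerDensity (a + b) t) := by
  calc
    _ = ∫⁻ y, ∫⁻ t, ENNReal.ofReal (powerDensity a y) *
          (F t * ENNReal.ofReal (powerDensity b (t - y))) := by
      refine lintegral_congr fun y => ?_
      rw [lintegral_const_mul _ (by fun_prop), ← lintegral_add_left_eq_self
        (fun t => F t * ENNReal.ofReal (powerDensity b (t - y))) y]
      simp
    _ = ∫⁻ t, ∫⁻ y, ENNReal.ofReal (powerDensity a y) *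
          (F t * ENNReal.ofReal (powerDensity b (t - y))) :=
      lintegral_lintegral_swap (by fun_prop)
    _ = _ := by
      refine lintegral_congr fun t => ?_
      rw [← lintegral_powerDensity_mul_powerDensity_sub ha hb t,
        ← lintegral_const_mul _ (by fun_prop)]
      exact lintegral_congr fun y => by ring

lemma lintegral_sum_powerDensity (n : ℕ) (α : Fin (n + 1) → ℝ) (hα : ∀ j, 0 < α j)
    {F : ℝ → ENNReal} (hF : Measurable F) :
    ∫⁻ x : Fin (n + 1) → ℝ,
        F (∑ j, x j) * ∏ j, ENNReal.ofReal (powerDensity (α j) (x j)) =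
      ∫⁻ t, F t * ENNReal.ofReal (powerDensity (∑ j, α j) t) := by
  induction n generalizing F with
  | zero =>
    rw [← (volume_preserving_funUnique (Fin 1) ℝ).lintegral_comp (by fun_prop)]
    simp
    rfl
  | succ n ih =>
    have hpos : 0 < ∑ j : Fin (n + 1), α j.succ :=
      Finset.sum_pos (fun j _ => hα j.succ) Finset.univ_nonempty
    rw [← ((volume_preserving_piFinSuccAbove (fun _ : Fin (n + 2) => ℝ) 0).symm
      _).lintegral_comp (by fun_prop), Measure.volume_eq_prod,
      lintegral_prod _ (by fun_prop), Fin.sum_univ_succ α,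
      ← lintegral_lintegral_add_powerDensity (hα 0) hpos hF]
    refine lintegral_congr fun y => ?_
    rw [← ih (fun j => α j.succ) (fun j => hα j.succ) (F := fun t => F (y + t)) (by fun_prop),
      ← lintegral_const_mul _ (by fun_prop)]
    refine lintegral_congr fun x => ?_
    simp [MeasurableEquiv.piFinSuccAbove, Fin.sum_univ_succ, Fin.prod_univ_succ]
    ring

/-- The law of the sum of coordinates under a product of power densities is a power density. -/
lemma map_sum_withDensity_powerDensity (n : ℕ) (α : Fin (n + 1) → ℝ) (hα : ∀ j, 0 < α j) :
    ((volume : Measure (Fin (n + 1) → ℝ)).withDensity fun x =>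
        ∏ j, ENNReal.ofReal (powerDensity (α j) (x j))).map (fun x => ∑ j, x j) =
      volume.withDensity fun t => ENNReal.ofReal (powerDensity (∑ j, α j) t) := by
  refine Measure.ext_of_lintegral _ fun F hF => ?_
  rw [lintegral_map hF (by fun_prop),
    lintegral_withDensity_eq_lintegral_mul _ (by fun_prop) (by fun_prop),
    lintegral_withDensity_eq_lintegral_mul _ (by fun_prop) hF]
  simpa only [Pi.mul_apply, mul_comm] using lintegral_sum_powerDensity n α hα hF

lemma integral_sum_powerDensity (n : ℕ) (α : Fin (n + 1) → ℝ) (hα : ∀ j, 0 < α j)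
    {f : ℝ → ℝ} (hf : Measurable f) :
    ∫ x : Fin (n + 1) → ℝ, (∏ j, powerDensity (α j) (x j)) * f (∑ j, x j) =
      ∫ t, powerDensity (∑ j, α j) t * f t := by
  have hpos : 0 < ∑ j, α j := Finset.sum_pos (fun j _ => hα j) Finset.univ_nonempty
  have h := congrArg (fun μ : Measure ℝ => ∫ t, f t ∂μ) (map_sum_withDensity_powerDensity n α hα)
  rw [integral_map (by fun_prop) hf.aestronglyMeasurable,
    integral_withDensity_eq_integral_toReal_smul (by fun_prop)
      (Filter.Eventually.of_forall fun x => ENNReal.prod_lt_top fun j _ => ENNReal.ofReal_lt_top),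
    integral_withDensity_eq_integral_toReal_smul (by fun_prop)
      (Filter.Eventually.of_forall fun t => ENNReal.ofReal_lt_top)] at h
  simpa only [ENNReal.toReal_prod, ENNReal.toReal_ofReal (powerDensity_nonneg (hα _) _),
    ENNReal.toReal_ofReal (powerDensity_nonneg hpos _), smul_eq_mul] using h

/-- The Dirichlet integral formula: for `α₁,…,αₙ > 0` with `s = Σ αⱼ` and a measurable `ψ`
with `t ↦ ψ(t) t^{s−1}` integrable on `(0,1]`,
`∫_{S} ψ(Σxⱼ) Π xⱼ^{αⱼ−1} dx = (Π Γ(αⱼ)/Γ(s)) ∫₀¹ ψ(t) t^{s−1} dt`, where `S` is the open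
unit simplex `{x : xⱼ > 0, Σ xⱼ ≤ 1}`. -/
theorem stmt15 (n : ℕ) (hn : 1 ≤ n) (α : Fin n → ℝ) (hα : ∀ j, 0 < α j)
    (ψ : ℝ → ℝ) (hψ : Measurable ψ)
    (hint : IntegrableOn (fun t => ψ t * t ^ ((∑ j, α j) - 1)) (Set.Ioc (0 : ℝ) 1)) :
    (∫ x in {x : Fin n → ℝ | (∀ j, 0 < x j) ∧ ∑ j, x j ≤ 1},
        ψ (∑ j, x j) * ∏ j, (x j) ^ (α j - 1))
      = ((∏ j, Real.Gamma (α j)) / Real.Gamma (∑ j, α j))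
          * ∫ t in Set.Ioc (0 : ℝ) 1, ψ t * t ^ ((∑ j, α j) - 1) := by
  obtain ⟨n, rfl⟩ : ∃ m, n = m + 1 := ⟨n - 1, by omega⟩
  have hpos : 0 < ∑ j, α j := Finset.sum_pos (fun j _ => hα j) Finset.univ_nonempty
  have hΓ : ∀ j, Real.Gamma (α j) ≠ 0 := fun j => (Real.Gamma_pos_of_pos (hα j)).ne'
  have hS : MeasurableSet {x : Fin (n + 1) → ℝ | (∀ j, 0 < x j) ∧ ∑ j, x j ≤ 1} := by
    measurability
  have hmain := integral_sum_powerDensity n α hα (hψ.indicator (measurableSet_Iic (a := (1 : ℝ))))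
  rw [← integral_indicator hS, ← integral_indicator measurableSet_Ioc]
  calc
    _ = ∫ x : Fin (n + 1) → ℝ, (∏ j, Real.Gamma (α j)) *
          ((∏ j, powerDensity (α j) (x j)) * (Set.Iic 1).indicator ψ (∑ j, x j)) := by
      refine integral_congr_ae (Filter.Eventually.of_forall fun x => ?_)
      by_cases hx : ∀ j, 0 < x j
      · have hprod : (∏ j, Real.Gamma (α j)) * ∏ j, powerDensity (α j) (x j) =
            ∏ j, x j ^ (α j - 1) := by
          rw [← Finset.prod_mul_distrib]
          refine Finset.prod_congr rfl fun j _ => ?_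
          rw [powerDensity_of_pos _ (hx j), mul_div_cancel₀ _ (hΓ j)]
        simp only [← mul_assoc, hprod]
        by_cases hx1 : ∑ j, x j ≤ 1 <;> simp [Set.indicator, hx, hx1, mul_comm]
      · obtain ⟨j, hj⟩ := not_forall.mp hx
        have hzero : ∏ j, powerDensity (α j) (x j) = 0 :=
          Finset.prod_eq_zero (Finset.mem_univ j) (powerDensity_of_nonpos _ (not_lt.mp hj))
        simp only [hzero, zero_mul, mul_zero]
        exact Set.indicator_of_notMem (fun h => hx h.1) _
    _ = (∏ j, Real.Gamma (α j)) *
          ∫ t, powerDensity (∑ j, α j) t * (Set.Iic 1).indicator ψ t := by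
      rw [integral_const_mul, hmain]
    _ = _ := by
      rw [div_mul_eq_mul_div, mul_div_assoc, ← integral_div]
      congr 1
      refine integral_congr_ae (Filter.Eventually.of_forall fun t => ?_)
      by_cases ht : 0 < t <;> by_cases ht1 : t ≤ 1 <;>
        simp [Set.indicator, powerDensity, ht, ht1]
      ring
end

section
/- There exists a universal constant C > 0 such that the following holds. Let k ≥ 3 be an integer, a > 0 a real number, and ε ∈ (0,1). Let θ₁, …, θ_k be independent real Gaussian random variables with θ_j ~ N(0, a⁻¹·e^{−j/a}). Then P( Σ_{j=1}^k θ_j² ≤ ε²/2 ) ≥ (C/k) · e^{k(k+1)/(4a)} · e^{−k²/(2a)} · (2e·ε²/k)^{k/2}. -/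
open MeasureTheory ProbabilityTheory

lemma one_eighth_le_gaussianPDFReal {x : ℝ} (hx : x ^ 2 ≤ 1) :
    1 / 8 ≤ gaussianPDFReal 0 1 x := by
  have hsqrt : √(2 * Real.pi * ((1 : NNReal) : ℝ)) ≤ 3 := by
    rw [Real.sqrt_le_left (by norm_num)]
    have := Real.pi_lt_d2
    norm_num
    linarith
  have hpos : 0 < √(2 * Real.pi * ((1 : NNReal) : ℝ)) := by
    have := Real.pi_pos
    simp only [NNReal.coe_one, mul_one]
    positivity
  have hexp : (1 / 2 : ℝ) ≤ Real.exp (-(x - 0) ^ 2 / (2 * ((1 : NNReal) : ℝ))) := by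
    refine le_trans ?_ (Real.add_one_le_exp _)
    simp only [NNReal.coe_one, sub_zero]
    linarith
  rw [gaussianPDFReal_def]
  calc (1 / 8 : ℝ) ≤ 3⁻¹ * (1 / 2) := by norm_num
    _ ≤ _ := mul_le_mul (inv_anti₀ hpos hsqrt) hexp (by norm_num) (by positivity)

lemma ofReal_div_four_le_gaussianReal_Icc {s : ℝ} (hs0 : 0 ≤ s) (hs1 : s ≤ 1) :
    ENNReal.ofReal (s / 4) ≤ gaussianReal 0 1 (Set.Icc (-s) s) := by
  rw [gaussianReal_apply 0 one_ne_zero]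
  calc ENNReal.ofReal (s / 4)
      = ∫⁻ _ in Set.Icc (-s) s, ENNReal.ofReal (1 / 8) := by
        rw [setLIntegral_const, Real.volume_Icc, ← ENNReal.ofReal_mul (by norm_num)]
        congr 1
        ring
    _ ≤ _ := by
        refine setLIntegral_mono' measurableSet_Icc fun x hx => ?_
        refine ENNReal.ofReal_le_ofReal (one_eighth_le_gaussianPDFReal ?_)
        nlinarith [hx.1, hx.2]

lemma ofReal_div_four_le_gaussianReal_Icc_of_sq_mul_le {v : NNReal} {r s : ℝ} (hr : 0 ≤ r)
    (hs0 : 0 ≤ s) (hs1 : s ≤ 1) (h : s ^ 2 * v ≤ r ^ 2) :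
    ENNReal.ofReal (s / 4) ≤ gaussianReal 0 v (Set.Icc (-r) r) := by
  have hmap : gaussianReal 0 v = (gaussianReal 0 1).map (√(v : ℝ) * ·) := by
    rw [gaussianReal_map_const_mul]
    congr 1
    · simp
    · ext
      simp
  rw [hmap, Measure.map_apply (by fun_prop) measurableSet_Icc]
  refine (ofReal_div_four_le_gaussianReal_Icc hs0 hs1).trans (measure_mono fun x hx => ?_)
  refine abs_le.mp (abs_le_of_sq_le_sq ?_ hr)
  rw [mul_pow, Real.sq_sqrt v.coe_nonneg]
  have hx2 : x ^ 2 ≤ s ^ 2 := sq_le_sq.mpr ((abs_le.mpr hx).trans (le_abs_self s))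
  nlinarith [mul_le_mul_of_nonneg_right hx2 v.coe_nonneg]

lemma inv_mul_exp_neg_div_le {a t : ℝ} (ha : 0 < a) (ht : 0 < t) :
    a⁻¹ * Real.exp (-t / a) ≤ (2 * t)⁻¹ := by
  have h2 : 2 * (t / a) ≤ Real.exp (t / a) := by
    have h := Real.add_one_le_exp (t / a - 1)
    have he : Real.exp (t / a) = Real.exp 1 * Real.exp (t / a - 1) := by
      rw [← Real.exp_add]
      congr 1
      ring
    have h1 := Real.exp_one_gt_two
    have hta : 0 < t / a := by positivity
    rw [he]
    nlinarith
  rw [neg_div, Real.exp_neg, ← mul_inv]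
  refine inv_anti₀ (by positivity) ?_
  calc 2 * t = a * (2 * (t / a)) := by field_simp
    _ ≤ _ := by gcongr

lemma prod_fin_sqrt_add_one (k : ℕ) :
    ∏ j : Fin k, √((j : ℝ) + 1) = √(k.factorial : ℝ) := by
  rw [Fin.prod_univ_eq_prod_range (fun j : ℕ => √((j : ℝ) + 1)) k,
    ← Real.sqrt_prod _ (fun i _ => by positivity), ← Finset.prod_range_add_one_eq_factorial]
  push_cast
  rfl

lemma exp_mul_rpow_le_prod {k : ℕ} (hk : 0 < k) {ε : ℝ} (hε : 0 < ε) :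
    Real.exp (-48) * (2 * Real.exp 1 * ε ^ 2 / k) ^ ((k : ℝ) / 2)
      ≤ ∏ j : Fin k, ε * √((j : ℝ) + 1) / √k / 4 := by
  have hk0 : (0 : ℝ) < k := by exact_mod_cast hk
  have hprod : ∏ j : Fin k, ε * √((j : ℝ) + 1) / √k / 4
      = (ε / √k / 4) ^ k * √(k.factorial : ℝ) := by
    rw [← prod_fin_sqrt_add_one, ← Fin.prod_const, ← Finset.prod_mul_distrib]
    exact Finset.prod_congr rfl fun j _ => by ring
  rw [hprod]
  have hbase : 0 ≤ 2 * Real.exp 1 * ε ^ 2 / k := by positivity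
  refine le_of_pow_le_pow_left₀ two_ne_zero (by positivity) ?_
  have hl : (Real.exp (-48) * (2 * Real.exp 1 * ε ^ 2 / k) ^ ((k : ℝ) / 2)) ^ 2
      = Real.exp (-96) * (2 * Real.exp 1 * ε ^ 2 / k) ^ k := by
    rw [mul_pow, ← Real.exp_nat_mul, ← Real.rpow_mul_natCast hbase, ← Real.rpow_natCast _ k]
    congr 2
    · norm_num
    · push_cast; ring
  have hr : ((ε / √k / 4) ^ k * √(k.factorial : ℝ)) ^ 2
      = (ε ^ 2 / k / 16) ^ k * k.factorial := by
    rw [mul_pow, Real.sq_sqrt (by positivity), ← pow_mul, mul_comm k 2, pow_mul]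
    congr 2
    rw [div_pow, div_pow, Real.sq_sqrt hk0.le]
    norm_num
  rw [hl, hr]
  have hfac : (96 : ℝ) ^ k * Real.exp (-96) ≤ k.factorial := by
    have h := Real.pow_div_factorial_le_exp (x := 96) (by norm_num) k
    rw [div_le_iff₀ (by positivity)] at h
    rw [Real.exp_neg, ← div_eq_mul_inv, div_le_iff₀ (Real.exp_pos _)]
    linarith
  calc Real.exp (-96) * (2 * Real.exp 1 * ε ^ 2 / k) ^ k
      ≤ Real.exp (-96) * (ε ^ 2 / k / 16 * 96) ^ k := by
        gcongr
        have he := Real.exp_one_lt_three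
        calc 2 * Real.exp 1 * ε ^ 2 / k = 2 * Real.exp 1 * (ε ^ 2 / k) := by ring
          _ ≤ 6 * (ε ^ 2 / k) := by gcongr; linarith
          _ = _ := by ring
    _ = (ε ^ 2 / k / 16) ^ k * (96 ^ k * Real.exp (-96)) := by rw [mul_pow]; ring
    _ ≤ _ := by gcongr

lemma prod_le_pi_gaussianReal_sum_sq_le {k : ℕ} (hk : 0 < k) {a ε : ℝ} (ha : 0 < a)
    (hε0 : 0 < ε) (hε1 : ε ≤ 1) :
    ENNReal.ofReal (∏ j : Fin k, ε * √((j : ℝ) + 1) / √k / 4)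
      ≤ (Measure.pi fun j : Fin k =>
            gaussianReal 0 (a⁻¹ * Real.exp (-((j : ℝ) + 1) / a)).toNNReal)
          {θ : Fin k → ℝ | ∑ j, θ j ^ 2 ≤ ε ^ 2 / 2} := by
  have hk0 : (0 : ℝ) < k := by exact_mod_cast hk
  set r : ℝ := √(ε ^ 2 / (2 * k))
  have hr2 : r ^ 2 = ε ^ 2 / (2 * k) := Real.sq_sqrt (by positivity)
  have hsub : Set.univ.pi (fun _ : Fin k => Set.Icc (-r) r)
      ⊆ {θ : Fin k → ℝ | ∑ j, θ j ^ 2 ≤ ε ^ 2 / 2} := by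
    intro θ hθ
    calc ∑ j, θ j ^ 2 ≤ ∑ _j : Fin k, r ^ 2 :=
          Finset.sum_le_sum fun j _ =>
            sq_le_sq.mpr ((abs_le.mpr (hθ j (Set.mem_univ j))).trans (le_abs_self r))
      _ = ε ^ 2 / 2 := by
          rw [Finset.sum_const, Finset.card_univ, Fintype.card_fin, nsmul_eq_mul, hr2]
          field_simp
  refine le_trans ?_ (measure_mono hsub)
  rw [Measure.pi_pi, ENNReal.ofReal_prod_of_nonneg fun j _ => by positivity]
  refine Finset.prod_le_prod' fun j _ => ?_
  have hj : (j : ℝ) + 1 ≤ k := by exact_mod_cast j.isLt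
  refine ofReal_div_four_le_gaussianReal_Icc_of_sq_mul_le (Real.sqrt_nonneg _) (by positivity)
    ?_ ?_
  · rw [div_le_one (by positivity)]
    calc ε * √((j : ℝ) + 1) ≤ 1 * √(k : ℝ) := by gcongr
      _ = _ := one_mul _
  · rw [Real.coe_toNNReal _ (by positivity), hr2, div_pow, mul_pow,
      Real.sq_sqrt (by positivity), Real.sq_sqrt hk0.le]
    calc ε ^ 2 * ((j : ℝ) + 1) / k * (a⁻¹ * Real.exp (-((j : ℝ) + 1) / a))
        ≤ ε ^ 2 * ((j : ℝ) + 1) / k * (2 * ((j : ℝ) + 1))⁻¹ := by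
          gcongr
          exact inv_mul_exp_neg_div_le ha (by positivity)
      _ = ε ^ 2 / (2 * k) := by field_simp

/-- Gaussian small-ball lower bound for the truncated Karhunen–Loève coefficients of the
rescaled squared-exponential process: there is a universal constant `C > 0` such that for
independent `θⱼ ~ N(0, a⁻¹e^{−j/a})`, `j = 1,…,k` (`k ≥ 3`, `a > 0`, `ε ∈ (0,1)`),
`P(Σⱼ θⱼ² ≤ ε²/2) ≥ (C/k) e^{k(k+1)/(4a)} e^{−k²/(2a)} (2eε²/k)^{k/2}`. -/
theorem stmt16 :
    ∃ C : ℝ, 0 < C ∧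
      ∀ (k : ℕ) (_hk : 3 ≤ k) (a : ℝ) (_ha : 0 < a) (ε : ℝ) (_hε0 : 0 < ε) (_hε1 : ε < 1),
        ENNReal.ofReal ((C / k) * Real.exp ((k : ℝ) * (k + 1) / (4 * a))
            * Real.exp (-(k : ℝ) ^ 2 / (2 * a))
            * (2 * Real.exp 1 * ε ^ 2 / k) ^ ((k : ℝ) / 2))
          ≤ (Measure.pi fun j : Fin k =>
                gaussianReal 0 (a⁻¹ * Real.exp (-((j : ℝ) + 1) / a)).toNNReal)
              {θ : Fin k → ℝ | ∑ j, θ j ^ 2 ≤ ε ^ 2 / 2} := by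
  refine ⟨Real.exp (-48), Real.exp_pos _, fun k hk a ha ε hε0 hε1 => ?_⟩
  have hk1 : (1 : ℝ) ≤ k := by exact_mod_cast (by omega : 1 ≤ k)
  refine le_trans (ENNReal.ofReal_le_ofReal ?_)
    (prod_le_pi_gaussianReal_sum_sq_le (by omega) ha hε0 hε1.le)
  refine le_trans ?_ (exp_mul_rpow_le_prod (by omega) hε0)
  have hexp : Real.exp ((k : ℝ) * (k + 1) / (4 * a)) * Real.exp (-(k : ℝ) ^ 2 / (2 * a)) ≤ 1 := by
    rw [← Real.exp_add, Real.exp_le_one_iff]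
    have h : (k : ℝ) * (k + 1) / (4 * a) + -(k : ℝ) ^ 2 / (2 * a)
        = -((k : ℝ) * (k - 1) / (4 * a)) := by
      field_simp
      ring
    rw [h, neg_nonpos]
    exact div_nonneg (mul_nonneg (by linarith) (by linarith)) (by linarith)
  refine mul_le_mul_of_nonneg_right ?_ (by positivity)
  rw [mul_assoc]
  calc _ ≤ Real.exp (-48) * 1 := mul_le_mul (div_le_self (Real.exp_pos _).le hk1) hexp
        (by positivity) (Real.exp_pos _).le
    _ = _ := mul_one _
end
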